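/- Let σ_1,…,σ_n : Ω → H be a (k+1)-nondegenerate holomorphic frame, k ≥ 1, and define the curvature coefficient of the k-jet bundle K(z) := ∂/∂z̄ ( (J_k h)⁻¹ · ∂(J_k h)/∂z )(z), a (k+1)n×(k+1)n matrix. Writing K(z) in (k+1)×(k+1) blocks K_{r,s}(z) of size n×n, 0 ≤ r,s ≤ k, one has: K_{r,s}(z) = 0 whenever 0 ≤ s ≤ k−1 (every block column except the last vanishes), and the bottom-right block is K_{k,k}(z) = (det J_k h(z))⁻¹ · det(J_{k−1}h(z)) · h_k(z)⁻¹ · h_{k+1}(z). -/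

import Mathlib

open Matrix

noncomputable section

/-- Wirtinger derivative `∂g/∂z := (1/2)(∂g/∂x − i·∂g/∂y)`. -/
def Dz {E : Type*} [NormedAddCommGroup E] [NormedSpace ℂ E] (g : ℂ → E) (z : ℂ) : E :=
  (1 / 2 : ℂ) • (fderiv ℝ g z 1 - Complex.I • fderiv ℝ g z Complex.I)

/-- Wirtinger derivative `∂g/∂z̄ := (1/2)(∂g/∂x + i·∂g/∂y)`. -/
def Dzbar {E : Type*} [NormedAddCommGroup E] [NormedSpace ℂ E] (g : ℂ → E) (z : ℂ) : E :=
  (1 / 2 : ℂ) • (fderiv ℝ g z 1 + Complex.I • fderiv ℝ g z Complex.I)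

/-- Entrywise Wirtinger derivative `∂/∂z` of a matrix-valued function. -/
def mDz {ι : Type*} (M : ℂ → Matrix ι ι ℂ) (z : ℂ) : Matrix ι ι ℂ :=
  Matrix.of fun i j => Dz (fun w => M w i j) z

/-- Entrywise Wirtinger derivative `∂/∂z̄` of a matrix-valued function. -/
def mDzbar {ι : Type*} (M : ℂ → Matrix ι ι ℂ) (z : ℂ) : Matrix ι ι ℂ :=
  Matrix.of fun i j => Dzbar (fun w => M w i j) z

variable {H : Type*} [NormedAddCommGroup H] [InnerProductSpace ℂ H] [CompleteSpace H]

/-- `⟪x, y⟫` is the Mathlib inner product (conjugate-linear in the first argument);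
it equals the paper's inner product `⟨y, x⟩`, which is linear in the first argument. -/
local notation "⟪" x ", " y "⟫" => (inner ℂ x y : ℂ)

/-- `jGram σ N z` is the Gram matrix of the family
`(σ_1(z),…,σ_n(z), σ_1′(z),…,σ_n′(z),…,σ_1^{(N−1)}(z),…,σ_n^{(N−1)}(z))`, with `(a,b)` entry
equal to `⟨b-th vector, a-th vector⟩_paper = ⟪a-th vector, b-th vector⟫`.  The jet Gram matrix
`J_k h` of the paper is `jGram σ (k+1)`. -/
def jGram {n : ℕ} (σ : Fin n → ℂ → H) (N : ℕ) (z : ℂ) :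
    Matrix (Fin N × Fin n) (Fin N × Fin n) ℂ :=
  Matrix.of fun p q =>
    ⟪iteratedDeriv (p.1 : ℕ) (σ p.2) z, iteratedDeriv (q.1 : ℕ) (σ q.2) z⟫

/-- `hMat σ m z` is the paper's matrix `h_m(z)`: its `(i,j)` entry is the determinant of the
`(nm+1)×(nm+1)` matrix whose `(a,b)` entry is `⟨u_b, v_a⟩_paper = ⟪v_a, u_b⟫`, where
`u` is the family `(σ_1(z),…,σ_n^{(m−1)}(z))` followed by `σ_j^{(m)}(z)` and `v` is the same
family followed by `σ_i^{(m)}(z)`.  (For `m = 0` this is the Gram matrix `h_0 = J_0 h`.) -/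
def hMat {n : ℕ} (σ : Fin n → ℂ → H) (m : ℕ) (z : ℂ) : Matrix (Fin n) (Fin n) ℂ :=
  Matrix.of fun i j =>
    (Matrix.of fun a b : (Fin m × Fin n) ⊕ Unit =>
      ⟪Sum.elim (fun lp : Fin m × Fin n => iteratedDeriv (lp.1 : ℕ) (σ lp.2) z)
          (fun _ => iteratedDeriv m (σ i) z) a,
        Sum.elim (fun lp : Fin m × Fin n => iteratedDeriv (lp.1 : ℕ) (σ lp.2) z)
          (fun _ => iteratedDeriv m (σ j) z) b⟫).det

/-!
For a holomorphic frame `τ` with Gram matrix `h`, the operator `∂/∂z` differentiates only the linear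
slot of `h` and `∂/∂z̄` only the conjugate-linear one. Hence `∂/∂z̄ (h⁻¹ · ∂h/∂z) = h⁻¹ S`, where
`S` is the Schur complement of `h` in the Gram matrix of `τ` and `τ'`, i.e. the Gram matrix of the
derivatives `τ'` modulo the span of `τ`.

When `τ` is the frame of `k`-jets, every derivative except those of the top-order entries is again
a member of `τ`, so that `S` vanishes outside its bottom-right block. By Schur's determinant formula
that block is `(det J_k h)⁻¹ h_{k+1}`, and by block inversion the bottom-right block of `(J_k h)⁻¹`
is the inverse of the Schur complement `(det J_{k-1} h)⁻¹ h_k`.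
-/

open scoped Topology

section Wirtinger

variable {E : Type*} [NormedAddCommGroup E] [NormedSpace ℂ E]

theorem Dzbar_congr {f g : ℂ → E} {z : ℂ} (h : f =ᶠ[𝓝 z] g) : Dzbar f z = Dzbar g z := by
  simp only [Dzbar, h.fderiv_eq]

theorem fderiv_real_apply_eq_smul_deriv {f : ℂ → E} {z : ℂ} (hf : DifferentiableAt ℂ f z)
    (v : ℂ) : fderiv ℝ f z v = v • deriv f z := by
  rw [hf.fderiv_restrictScalars ℝ, ContinuousLinearMap.coe_restrictScalars',
    fderiv_eq_smul_deriv]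

theorem Dz_eq_deriv {f : ℂ → E} {z : ℂ} (hf : DifferentiableAt ℂ f z) : Dz f z = deriv f z := by
  simp only [Dz, fderiv_real_apply_eq_smul_deriv hf, smul_smul, Complex.I_mul_I]
  module

theorem Dzbar_eq_zero {f : ℂ → E} {z : ℂ} (hf : DifferentiableAt ℂ f z) : Dzbar f z = 0 := by
  simp only [Dzbar, fderiv_real_apply_eq_smul_deriv hf, smul_smul, Complex.I_mul_I]
  module

section NormedAlgebra

variable {A : Type*} [NormedRing A] [NormedAlgebra ℂ A] {f g : ℂ → A} {z : ℂ}

theorem Dzbar_mul (hf : DifferentiableAt ℝ f z) (hg : DifferentiableAt ℝ g z) :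
    Dzbar (fun w => f w * g w) z = Dzbar f z * g z + f z * Dzbar g z := by
  simp only [Dzbar, fderiv_fun_mul' hf hg, _root_.add_apply, _root_.smul_apply, smul_eq_mul,
    op_smul_eq_mul, smul_mul_assoc, mul_smul_comm, add_mul, mul_add, smul_add]
  abel

theorem Dzbar_ringInverse [HasSummableGeomSeries A] (hf : DifferentiableAt ℝ f z)
    (hz : IsUnit (f z)) :
    Dzbar (fun w => Ring.inverse (f w)) z =
      -(Ring.inverse (f z) * Dzbar f z * Ring.inverse (f z)) := by
  obtain ⟨u, hu⟩ := hz
  have hinv : HasFDerivAt Ring.inverse _ (f z) := hu ▸ hasFDerivAt_ringInverse (𝕜 := ℝ) u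
  have hcomp : HasFDerivAt (fun w => Ring.inverse (f w)) _ z := hinv.comp z hf.hasFDerivAt
  have hderiv (v : ℂ) : fderiv ℝ (fun w => Ring.inverse (f w)) z v =
      -(Ring.inverse (f z) * fderiv ℝ f z v * Ring.inverse (f z)) := by
    rw [hcomp.fderiv, ← hu, Ring.inverse_unit]
    rfl
  simp only [Dzbar, hderiv, mul_add, add_mul, smul_add, smul_neg, mul_smul_comm, smul_mul_assoc,
    neg_add]

end NormedAlgebra

section Inner

variable {F : Type*} [NormedAddCommGroup F] [InnerProductSpace ℂ F] {f g : ℂ → F} {z : ℂ}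

theorem Dz_inner (hf : DifferentiableAt ℝ f z) (hg : DifferentiableAt ℝ g z) :
    Dz (fun w => ⟪f w, g w⟫) z = ⟪Dzbar f z, g z⟫ + ⟪f z, Dz g z⟫ := by
  simp only [Dz, Dzbar, fderiv_inner_apply ℂ hf hg, inner_smul_left, inner_smul_right,
    inner_add_left, inner_sub_right, smul_eq_mul, map_div₀, map_one, map_ofNat, Complex.conj_I]
  ring

theorem Dzbar_inner (hf : DifferentiableAt ℝ f z) (hg : DifferentiableAt ℝ g z) :
    Dzbar (fun w => ⟪f w, g w⟫) z = ⟪Dz f z, g z⟫ + ⟪f z, Dzbar g z⟫ := by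
  simp only [Dz, Dzbar, fderiv_inner_apply ℂ hf hg, inner_smul_left, inner_smul_right,
    inner_sub_left, inner_add_right, smul_eq_mul, map_div₀, map_one, map_ofNat, Complex.conj_I]
  ring

end Inner

end Wirtinger

section Schur

theorem toBlocks₂₂_inv_fromBlocks {α β R : Type*} [Fintype α] [Fintype β] [DecidableEq α]
    [DecidableEq β] [CommRing R] (A : Matrix α α R) (B : Matrix α β R) (C : Matrix β α R)
    (D : Matrix β β R) [Invertible A] :
    (fromBlocks A B C D)⁻¹.toBlocks₂₂ = (D - C * ⅟A * B)⁻¹ := by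
  by_cases hS : IsUnit (D - C * ⅟A * B)
  · have hM : IsUnit (fromBlocks A B C D) := isUnit_fromBlocks_iff_of_invertible₁₁.2 hS
    let _ := hS.invertible
    let _ := hM.invertible
    rw [← invOf_eq_nonsing_inv, invOf_fromBlocks₁₁_eq, toBlocks_fromBlocks₂₂,
      invOf_eq_nonsing_inv]
  · have hM : ¬IsUnit (fromBlocks A B C D) := isUnit_fromBlocks_iff_of_invertible₁₁.not.2 hS
    rw [isUnit_iff_isUnit_det] at hS hM
    rw [nonsing_inv_apply_not_isUnit _ hM, nonsing_inv_apply_not_isUnit _ hS]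
    rfl

theorem matrix_inv_smul_of_ne_zero {α K : Type*} [Fintype α] [DecidableEq α] [Field K] {c : K}
    (hc : c ≠ 0) (A : Matrix α α K) : (c • A)⁻¹ = c⁻¹ • A⁻¹ := by
  by_cases hA : IsUnit A.det
  · exact inv_smul' A (Units.mk0 c hc) hA
  · have hcA : ¬IsUnit (c • A).det := by
      rwa [det_smul, (hc.isUnit.pow _).mul_left_iff]
    rw [nonsing_inv_apply_not_isUnit _ hA, nonsing_inv_apply_not_isUnit _ hcA, smul_zero]

theorem submatrix_mul_of_forall_notMem_range {α β γ κ l m R : Type*} [Fintype β] [Fintype κ]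
    [NonUnitalNonAssocSemiring R] (X : Matrix α β R) (Y : Matrix β γ R) {f : κ → β}
    (hf : Function.Injective f) (hY : ∀ b ∉ Set.range f, ∀ c, Y b c = 0) (g : l → α)
    (h : m → γ) :
    (X * Y).submatrix g h = X.submatrix g f * Y.submatrix f h := by
  ext i j
  exact (Fintype.sum_of_injective f hf _ _
    (fun b hb => (congrArg (X (g i) b * ·) (hY b hb (h j))).trans (mul_zero _)) fun _ => rfl).symm

end Schur

section Gram

variable (𝕜 : Type*) {F ι κ μ : Type*} [RCLike 𝕜] [NormedAddCommGroup F] [InnerProductSpace 𝕜 F]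

/-- The matrix of inner products between two families of vectors. -/
def crossGram (u : ι → F) (v : κ → F) : Matrix ι κ 𝕜 :=
  Matrix.of fun i j => inner 𝕜 (u i) (v j)

theorem crossGram_self (u : ι → F) : crossGram 𝕜 u u = gram 𝕜 u :=
  rfl

theorem crossGram_sumElim {ι' κ' : Type*} (u : ι → F) (v : κ → F) (u' : ι' → F) (v' : κ' → F) :
    crossGram 𝕜 (Sum.elim u v) (Sum.elim u' v') =
      fromBlocks (crossGram 𝕜 u u') (crossGram 𝕜 u v') (crossGram 𝕜 v u') (crossGram 𝕜 v v') := by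
  ext (i | i) (j | j) <;> rfl

variable [Fintype ι] [DecidableEq ι]

/-- The Schur complement of `gram 𝕜 u` in the matrix of inner products of `u ⊕ v` with `u ⊕ w`,
i.e. the matrix of inner products of `v` and `w` modulo the span of `u`. -/
def gramSchurCompl (u : ι → F) (v : κ → F) (w : μ → F) : Matrix κ μ 𝕜 :=
  crossGram 𝕜 v w - crossGram 𝕜 v u * (gram 𝕜 u)⁻¹ * crossGram 𝕜 u w

variable {𝕜} {u : ι → F}

theorem isUnit_det_gram (hu : LinearIndependent 𝕜 u) : IsUnit (gram 𝕜 u).det :=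
  (det_gram_ne_zero_iff_linearIndependent.2 hu).isUnit

theorem gramSchurCompl_eq_zero_of_left_eq (hu : LinearIndependent 𝕜 u) {v : κ → F} {a : κ}
    {c : ι} (h : v a = u c) (w : μ → F) (b : μ) : gramSchurCompl 𝕜 u v w a b = 0 := by
  have hrow : (crossGram 𝕜 v u * (gram 𝕜 u)⁻¹ * crossGram 𝕜 u w) a b =
      (gram 𝕜 u * (gram 𝕜 u)⁻¹ * crossGram 𝕜 u w) c b := by
    simp only [Matrix.mul_apply, crossGram, gram, Matrix.of_apply, h]
  rw [gramSchurCompl, Matrix.sub_apply, hrow, mul_nonsing_inv _ (isUnit_det_gram hu),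
    Matrix.one_mul, sub_eq_zero]
  simp only [crossGram, Matrix.of_apply, h]

theorem gramSchurCompl_eq_zero_of_right_eq (hu : LinearIndependent 𝕜 u) {w : μ → F} {b : μ}
    {c : ι} (h : w b = u c) (v : κ → F) (a : κ) : gramSchurCompl 𝕜 u v w a b = 0 := by
  have hcol : (crossGram 𝕜 v u * (gram 𝕜 u)⁻¹ * crossGram 𝕜 u w) a b =
      (crossGram 𝕜 v u * (gram 𝕜 u)⁻¹ * gram 𝕜 u) a c := by
    simp only [Matrix.mul_apply, crossGram, gram, Matrix.of_apply, h]
  rw [gramSchurCompl, Matrix.sub_apply, hcol, Matrix.mul_assoc,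
    nonsing_inv_mul _ (isUnit_det_gram hu), Matrix.mul_one, sub_eq_zero]
  simp only [crossGram, Matrix.of_apply, h]

variable [Fintype κ] [DecidableEq κ]

theorem det_crossGram_sumElim (hu : LinearIndependent 𝕜 u) (v w : κ → F) :
    (crossGram 𝕜 (Sum.elim u v) (Sum.elim u w)).det =
      (gram 𝕜 u).det * (gramSchurCompl 𝕜 u v w).det := by
  let _ := invertibleOfIsUnitDet _ (isUnit_det_gram hu)
  rw [crossGram_sumElim, crossGram_self, det_fromBlocks₁₁, invOf_eq_nonsing_inv, gramSchurCompl]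

theorem toBlocks₂₂_inv_gram_sumElim (hu : LinearIndependent 𝕜 u) (v : κ → F) :
    (gram 𝕜 (Sum.elim u v))⁻¹.toBlocks₂₂ = (gramSchurCompl 𝕜 u v v)⁻¹ := by
  let _ := invertibleOfIsUnitDet _ (isUnit_det_gram hu)
  rw [← crossGram_self, crossGram_sumElim, crossGram_self, crossGram_self,
    toBlocks₂₂_inv_fromBlocks, invOf_eq_nonsing_inv, gramSchurCompl, crossGram_self]

end Gram

section Curvature

-- Entrywise derivatives do not depend on the norm; an operator norm makes square matrices a Banach
-- algebra, in which inversion is differentiable.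
open scoped Matrix.Norms.Operator

theorem differentiableAt_matrix {𝕜 E V ι κ : Type*} [NontriviallyNormedField 𝕜]
    [NormedAddCommGroup E] [NormedSpace 𝕜 E] [NormedAddCommGroup V] [NormedSpace 𝕜 V] [Finite ι]
    [Finite κ] {M : E → Matrix ι κ V} {x : E}
    (hM : ∀ i j, DifferentiableAt 𝕜 (fun y => M y i j) x) : DifferentiableAt 𝕜 M x := by
  cases nonempty_fintype ι
  cases nonempty_fintype κ
  let L : (ι → κ → V) →L[𝕜] Matrix ι κ V := ⟨(ofLinearEquiv 𝕜).toLinearMap, continuous_id⟩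
  exact L.differentiableAt.comp x
    (differentiableAt_pi.2 fun i => differentiableAt_pi.2 fun j => hM i j)

variable {ι : Type*}

/-- The curvature coefficient `∂/∂z̄ (h⁻¹ · ∂h/∂z)` of a Hermitian metric on a holomorphic vector
bundle, where `h` is the Gram matrix of the metric in a holomorphic frame. -/
def chernCurvature [Fintype ι] [DecidableEq ι] (h : ℂ → Matrix ι ι ℂ) (z : ℂ) : Matrix ι ι ℂ :=
  mDzbar (fun w => (h w)⁻¹ * mDz h w) z

/-- The Gram matrix of the second fundamental form of the bundle spanned by a holomorphic frame
`τ`, as a subbundle of the trivial bundle: the inner products of the derivatives of the frame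
modulo its span. -/
def secondFundamentalGram {F : Type*} [NormedAddCommGroup F] [InnerProductSpace ℂ F] [Fintype ι]
    [DecidableEq ι] (τ : ι → ℂ → F) (z : ℂ) : Matrix ι ι ℂ :=
  gramSchurCompl ℂ (τ · z) (fun i => deriv (τ i) z) (fun i => deriv (τ i) z)

theorem mDzbar_congr {M N : ℂ → Matrix ι ι ℂ} {z : ℂ} (h : M =ᶠ[𝓝 z] N) :
    mDzbar M z = mDzbar N z := by
  ext i j
  exact Dzbar_congr (h.fun_comp fun X => X i j)

section CrossGram

variable {F : Type*} [NormedAddCommGroup F] [InnerProductSpace ℂ F] {σ τ : ι → ℂ → F} {z : ℂ}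

theorem mDz_crossGram (hσ : ∀ i, DifferentiableAt ℂ (σ i) z)
    (hτ : ∀ i, DifferentiableAt ℂ (τ i) z) :
    mDz (fun w => crossGram ℂ (σ · w) (τ · w)) z =
      crossGram ℂ (σ · z) (fun i => deriv (τ i) z) := by
  ext i j
  have h := Dz_inner ((hσ i).restrictScalars ℝ) ((hτ j).restrictScalars ℝ)
  rwa [Dzbar_eq_zero (hσ i), inner_zero_left, zero_add, Dz_eq_deriv (hτ j)] at h

theorem mDzbar_crossGram (hσ : ∀ i, DifferentiableAt ℂ (σ i) z)
    (hτ : ∀ i, DifferentiableAt ℂ (τ i) z) :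
    mDzbar (fun w => crossGram ℂ (σ · w) (τ · w)) z =
      crossGram ℂ (fun i => deriv (σ i) z) (τ · z) := by
  ext i j
  have h := Dzbar_inner ((hσ i).restrictScalars ℝ) ((hτ j).restrictScalars ℝ)
  rwa [Dzbar_eq_zero (hτ j), inner_zero_right, add_zero, Dz_eq_deriv (hσ i)] at h

end CrossGram

variable [Fintype ι]

theorem mDzbar_eq_Dzbar {M : ℂ → Matrix ι ι ℂ} {z : ℂ} (hM : DifferentiableAt ℝ M z) :
    mDzbar M z = Dzbar M z := by
  ext i j
  let L : Matrix ι ι ℂ →L[ℝ] ℂ := (entryLinearMap ℝ ℂ i j).toContinuousLinearMap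
  have h : fderiv ℝ (fun w => M w i j) z = L ∘L fderiv ℝ M z :=
    (L.hasFDerivAt.comp z hM.hasFDerivAt).fderiv
  simp only [mDzbar, Matrix.of_apply, Dzbar, h]
  rfl

variable [DecidableEq ι]

theorem mDzbar_inv_mul {M N : ℂ → Matrix ι ι ℂ} {z : ℂ} (hM : DifferentiableAt ℝ M z)
    (hN : DifferentiableAt ℝ N z) (hz : IsUnit (M z)) :
    mDzbar (fun w => (M w)⁻¹ * N w) z =
      (M z)⁻¹ * (mDzbar N z - mDzbar M z * (M z)⁻¹ * N z) := by
  simp only [nonsing_inv_eq_ringInverse]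
  have hinv := hM.inverse hz
  rw [mDzbar_eq_Dzbar (hinv.fun_mul hN), Dzbar_mul hinv hN, Dzbar_ringInverse hM hz,
    mDzbar_eq_Dzbar hM, mDzbar_eq_Dzbar hN]
  noncomm_ring

theorem chernCurvature_gram {τ : ι → ℂ → H} {z : ℂ} (hτ : ∀ i, AnalyticAt ℂ (τ i) z)
    (hli : LinearIndependent ℂ (τ · z)) :
    chernCurvature (fun w => gram ℂ (τ · w)) z =
      (gram ℂ (τ · z))⁻¹ * secondFundamentalGram τ z := by
  have hd (i) : DifferentiableAt ℂ (τ i) z := (hτ i).differentiableAt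
  have hd' (i) : DifferentiableAt ℂ (deriv (τ i)) z := (hτ i).deriv.differentiableAt
  have hmDz : ∀ᶠ w in 𝓝 z, mDz (fun w => gram ℂ (τ · w)) w =
      crossGram ℂ (τ · w) (fun i => deriv (τ i) w) := by
    filter_upwards [Filter.eventually_all.2 fun i => (hτ i).eventually_analyticAt] with w hw
    exact mDz_crossGram (fun i => (hw i).differentiableAt) fun i => (hw i).differentiableAt
  have hdiff {σ : ι → ℂ → H} (hσ : ∀ i, DifferentiableAt ℂ (σ i) z) :
      DifferentiableAt ℝ (fun w => crossGram ℂ (τ · w) (σ · w)) z :=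
    differentiableAt_matrix fun i j =>
      ((hd i).restrictScalars ℝ).inner ℂ ((hσ j).restrictScalars ℝ)
  have hunit : IsUnit (gram ℂ (τ · z)) := (isUnit_iff_isUnit_det _).2 (isUnit_det_gram hli)
  calc chernCurvature (fun w => gram ℂ (τ · w)) z
    _ = mDzbar (fun w => (gram ℂ (τ · w))⁻¹ * crossGram ℂ (τ · w) (fun i => deriv (τ i) w)) z :=
      mDzbar_congr (hmDz.mono fun w hw => congrArg ((gram ℂ (τ · w))⁻¹ * ·) hw)
    _ = _ := by
      simp only [← crossGram_self] at hunit ⊢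
      rw [mDzbar_inv_mul (hdiff hd) (hdiff hd') hunit, mDzbar_crossGram hd hd',
        mDzbar_crossGram hd hd, secondFundamentalGram, gramSchurCompl, crossGram_self]

end Curvature

section Jets

/-- The frame of the `(m - 1)`-jet bundle induced by a frame `σ`: the derivatives of the `σ i` of
order less than `m`. -/
def jetFrame {F ι : Type*} [NormedAddCommGroup F] [NormedSpace ℂ F] (σ : ι → ℂ → F) (m : ℕ) :
    Fin m × ι → ℂ → F :=
  fun p => iteratedDeriv p.1 (σ p.2)

/-- Splits the top-order derivatives off the index set of a jet. -/
def jetIndexEquiv (m : ℕ) (ι : Type*) : (Fin m × ι) ⊕ ι ≃ Fin (m + 1) × ι :=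
  (((finSuccEquivLast.prodCongr (Equiv.refl ι)).trans optionProdEquiv).trans
    (Equiv.sumComm ι (Fin m × ι))).symm

section NormedSpace

variable {F ι : Type*} [NormedAddCommGroup F] [NormedSpace ℂ F]

theorem deriv_jetFrame (σ : ι → ℂ → F) (m : ℕ) (p : Fin m × ι) :
    deriv (jetFrame σ m p) = iteratedDeriv (p.1 + 1) (σ p.2) :=
  iteratedDeriv_succ.symm

theorem deriv_jetFrame_of_lt (σ : ι → ℂ → F) {m : ℕ} {p : Fin m × ι} (hp : (p.1 : ℕ) + 1 < m) :
    deriv (jetFrame σ m p) = jetFrame σ m (⟨p.1 + 1, hp⟩, p.2) :=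
  deriv_jetFrame σ m p

theorem analyticAt_jetFrame [CompleteSpace F] {σ : ι → ℂ → F} {z : ℂ}
    (hσ : ∀ i, AnalyticAt ℂ (σ i) z) (m : ℕ) (p : Fin m × ι) :
    AnalyticAt ℂ (jetFrame σ m p) z := by
  rw [jetFrame, iteratedDeriv_eq_iterate]
  exact (hσ p.2).iterated_deriv p.1

theorem jetFrame_succ_comp_jetIndexEquiv (σ : ι → ℂ → F) (m : ℕ) (z : ℂ) :
    (jetFrame σ (m + 1) · z) ∘ jetIndexEquiv m ι =
      Sum.elim (jetFrame σ m · z) (fun i => iteratedDeriv m (σ i) z) := by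
  ext (p | i)
  · simp [jetIndexEquiv, jetFrame]
  · simp [jetIndexEquiv, jetFrame]

theorem linearIndependent_jetFrame_of_le {σ : ι → ℂ → F} {l m : ℕ} {z : ℂ} (hlm : l ≤ m)
    (h : LinearIndependent ℂ (jetFrame σ m · z)) : LinearIndependent ℂ (jetFrame σ l · z) :=
  h.comp (Prod.map (Fin.castLE hlm) id)
    ((Fin.castLE_injective hlm).prodMap Function.injective_id)

end NormedSpace

section SecondFundamentalGram

variable {F ι : Type*} [NormedAddCommGroup F] [InnerProductSpace ℂ F] [Fintype ι] [DecidableEq ι]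
  {σ : ι → ℂ → F} {m : ℕ} {z : ℂ}

theorem secondFundamentalGram_jetFrame_of_row_lt (h : LinearIndependent ℂ (jetFrame σ m · z))
    {p : Fin m × ι} (hp : (p.1 : ℕ) + 1 < m) (q : Fin m × ι) :
    secondFundamentalGram (jetFrame σ m) z p q = 0 :=
  gramSchurCompl_eq_zero_of_left_eq h (congrFun (deriv_jetFrame_of_lt σ hp) z) _ q

theorem secondFundamentalGram_jetFrame_of_col_lt (h : LinearIndependent ℂ (jetFrame σ m · z))
    (p : Fin m × ι) {q : Fin m × ι} (hq : (q.1 : ℕ) + 1 < m) :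
    secondFundamentalGram (jetFrame σ m) z p q = 0 :=
  gramSchurCompl_eq_zero_of_right_eq h (w := fun r => deriv (jetFrame σ m r) z)
    (congrFun (deriv_jetFrame_of_lt σ hq) z) _ p

end SecondFundamentalGram

variable {F : Type*} [NormedAddCommGroup F] [InnerProductSpace ℂ F] {n : ℕ} {σ : Fin n → ℂ → F}
  {m : ℕ} {z : ℂ}

theorem hMat_eq_smul_gramSchurCompl (h : LinearIndependent ℂ (jetFrame σ m · z)) :
    hMat σ m z = (jGram σ m z).det • gramSchurCompl ℂ (jetFrame σ m · z)
      (fun i => iteratedDeriv m (σ i) z) (fun i => iteratedDeriv m (σ i) z) := by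
  ext i j
  have hdet := det_crossGram_sumElim h (fun _ : Unit => iteratedDeriv m (σ i) z)
    (fun _ => iteratedDeriv m (σ j) z)
  rwa [det_unique (n := Unit)] at hdet

theorem jGram_succ_inv_submatrix_last (h : LinearIndependent ℂ (jetFrame σ m · z)) :
    (jGram σ (m + 1) z)⁻¹.submatrix (Prod.mk (Fin.last m)) (Prod.mk (Fin.last m)) =
      (gramSchurCompl ℂ (jetFrame σ m · z)
        (fun i => iteratedDeriv m (σ i) z) (fun i => iteratedDeriv m (σ i) z))⁻¹ := by
  rw [← toBlocks₂₂_inv_gram_sumElim h, ← jetFrame_succ_comp_jetIndexEquiv]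
  change _ = ((jGram σ (m + 1) z).submatrix (jetIndexEquiv m (Fin n))
    (jetIndexEquiv m (Fin n)))⁻¹.toBlocks₂₂
  rw [inv_submatrix_equiv]
  rfl

theorem hMat_succ_eq_smul_secondFundamentalGram
    (h : LinearIndependent ℂ (jetFrame σ (m + 1) · z)) :
    hMat σ (m + 1) z = (jGram σ (m + 1) z).det •
      (secondFundamentalGram (jetFrame σ (m + 1)) z).submatrix
        (Prod.mk (Fin.last m)) (Prod.mk (Fin.last m)) := by
  simp only [secondFundamentalGram, deriv_jetFrame]
  exact hMat_eq_smul_gramSchurCompl h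

theorem chernCurvature_jGram {σ : Fin n → ℂ → H} (hσ : ∀ i, AnalyticAt ℂ (σ i) z)
    (h : LinearIndependent ℂ (jetFrame σ m · z)) :
    chernCurvature (jGram σ m) z =
      (jGram σ m z)⁻¹ * secondFundamentalGram (jetFrame σ m) z :=
  chernCurvature_gram (analyticAt_jetFrame hσ m) h

end Jets

theorem stmt14_general {n : ℕ} (k : ℕ) {σ : Fin n → ℂ → H} {z : ℂ}
    (hσ : ∀ i, AnalyticAt ℂ (σ i) z)
    (hnd : LinearIndependent ℂ
      fun p : Fin (k + 1) × Fin n => iteratedDeriv (p.1 : ℕ) (σ p.2) z) :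
    (∀ p q : Fin (k + 1) × Fin n, (q.1 : ℕ) < k → chernCurvature (jGram σ (k + 1)) z p q = 0) ∧
      (chernCurvature (jGram σ (k + 1)) z).submatrix
          (Prod.mk (Fin.last k)) (Prod.mk (Fin.last k)) =
        ((jGram σ (k + 1) z).det⁻¹ * (jGram σ k z).det) • ((hMat σ k z)⁻¹ * hMat σ (k + 1) z) := by
  have hnd' : LinearIndependent ℂ (jetFrame σ k · z) :=
    linearIndependent_jetFrame_of_le k.le_succ hnd
  have hdet : (jGram σ (k + 1) z).det ≠ 0 := (isUnit_det_gram hnd).ne_zero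
  have hdet' : (jGram σ k z).det ≠ 0 := (isUnit_det_gram hnd').ne_zero
  have hscalar : (jGram σ (k + 1) z).det⁻¹ * (jGram σ k z).det *
      ((jGram σ k z).det⁻¹ * (jGram σ (k + 1) z).det) = 1 := by
    field_simp
  rw [chernCurvature_jGram hσ hnd]
  refine ⟨fun p q hq => ?_, ?_⟩
  · exact Finset.sum_eq_zero fun r _ => mul_eq_zero_of_right _
      (secondFundamentalGram_jetFrame_of_col_lt hnd r (Nat.succ_lt_succ hq))
  · have hrow (p) (hp : p ∉ Set.range (Prod.mk (Fin.last k))) (q) :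
        secondFundamentalGram (jetFrame σ (k + 1)) z p q = 0 :=
      secondFundamentalGram_jetFrame_of_row_lt hnd
        (Nat.succ_lt_succ (Fin.lt_last_iff_ne_last.2 fun h => hp ⟨p.2, Prod.ext h.symm rfl⟩)) q
    rw [submatrix_mul_of_forall_notMem_range _ _ (Prod.mk_right_injective _) hrow,
      jGram_succ_inv_submatrix_last hnd', hMat_succ_eq_smul_secondFundamentalGram hnd,
      hMat_eq_smul_gramSchurCompl hnd', matrix_inv_smul_of_ne_zero hdet', smul_mul_smul_comm,
      smul_smul, hscalar, one_smul]

/-- Block structure of the curvature of the `k`-jet bundle: for a `(k+1)`-nondegenerate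
holomorphic frame and `K := ∂/∂z̄((J_k h)⁻¹·∂(J_k h)/∂z)`, all block columns of `K` except the
last vanish, and the bottom-right `n×n` block equals
`(det J_k h)⁻¹·det(J_{k−1}h)·h_k⁻¹·h_{k+1}`. -/
theorem stmt14 {n : ℕ} (Ω : Set ℂ) (hΩ : IsOpen Ω) (k : ℕ) (hk : 1 ≤ k)
    (σ : Fin n → ℂ → H) (hσ : ∀ i, DifferentiableOn ℂ (σ i) Ω)
    (hnd : ∀ z ∈ Ω, LinearIndependent ℂ
      fun p : Fin (k + 2) × Fin n => iteratedDeriv (p.1 : ℕ) (σ p.2) z) :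
    ∀ z ∈ Ω,
      (∀ p q : Fin (k + 1) × Fin n, (q.1 : ℕ) ≤ k - 1 →
        mDzbar (fun w => (jGram σ (k + 1) w)⁻¹ * mDz (jGram σ (k + 1)) w) z p q = 0) ∧
      (Matrix.of fun i j : Fin n =>
          mDzbar (fun w => (jGram σ (k + 1) w)⁻¹ * mDz (jGram σ (k + 1)) w) z
            (Fin.last k, i) (Fin.last k, j)) =
        (((jGram σ (k + 1) z).det)⁻¹ * (jGram σ k z).det) •
          ((hMat σ k z)⁻¹ * hMat σ (k + 1) z) :=
  fun z hz =>
    have h := stmt14_general k (fun i => (hσ i).analyticAt (hΩ.mem_nhds hz))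
      (linearIndependent_jetFrame_of_le k.succ.le_succ (hnd z hz))
    ⟨fun p q hq => h.1 p q (by omega), h.2⟩
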